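/- Fix q ∈ (0,1) and define G(z) = Log(1 − qe^z) − Log(1 − q) + qz/(1−q), where Log is the principal branch of the complex logarithm. Then: (a) there exist δ ∈ (0,1) and C > 0 such that for all z ∈ ℂ with |z| ≤ δ one has q·e^{Re z} < 1 (so that Re(1 − qe^z) > 0 and G(z) is well-defined) and |G(z) + q z²/(2(1−q)²)| ≤ C|z|³; (b) there exists ε > 0 such that for all x ∈ [−π, π], Re G(ix) ≥ ε x², where Re G(ix) = (1/2)·log(1 + q² − 2q·cos x) − log(1−q). -/

import Mathlib

open Filter Complex

noncomputable def Gq (q : ℝ) (z : ℂ) : ℂ :=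
  Complex.log (1 - (q : ℂ) * Complex.exp z) - Complex.log (1 - (q : ℂ)) +
    (q : ℂ) * z / (1 - (q : ℂ))

/-! Put `a = q / (1 - q)`. Since `1 - q e^z = (1 - q) (1 - a (e^z - 1))` and the principal branch
splits off positive real factors, `G(z) = Log (1 - a (e^z - 1)) + a z`. The cubic estimate is the
composition of the second-order expansions of `Log (1 + w)` and `e^z`, in which the linear terms
cancel.

On the imaginary axis `2 Re G(ix) = log (L / (1 - q)²)` with `L = |1 - q e^{ix}|²`. The inequality
`log t ≥ 1 - 1 / t`, together with `L - (1 - q)² = 2 q (1 - cos x)` and `L ≤ (1 + q)²`, reduces the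
lower bound to `1 - cos x ≥ 2 x² / π²` on `[-π, π]`. -/

open Asymptotics Topology

theorem exists_radius_forall_and_norm_le_of_isBigO {E F G : Type*} [SeminormedAddCommGroup E]
    [Norm F] [SeminormedAddCommGroup G] {f : E → F} {g : E → G} {p : E → Prop} (hfg : f =O[𝓝 0] g)
    (hp : ∀ᶠ z in 𝓝 0, p z) :
    ∃ δ ∈ Set.Ioo (0 : ℝ) 1, ∃ C : ℝ, 0 < C ∧ ∀ z, ‖z‖ ≤ δ → p z ∧ ‖f z‖ ≤ C * ‖g z‖ := by
  obtain ⟨C, hC, hbound⟩ := hfg.exists_pos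
  obtain ⟨r, hr, hball⟩ := Metric.nhds_basis_closedBall.eventually_iff.1 (hp.and hbound.bound)
  refine ⟨min r (1 / 2), ⟨by positivity, by norm_num⟩, C, hC, fun z hz ↦ hball ?_⟩
  exact mem_closedBall_zero_iff.2 (hz.trans (min_le_left _ _))

theorem log_one_add_sub_quadratic_isBigO :
    (fun w : ℂ ↦ log (1 + w) - (w - w ^ 2 / 2)) =O[𝓝 0] fun w ↦ w ^ 3 := by
  convert! log_sub_logTaylor_isBigO 2 using 3 with w
  simp only [logTaylor, Finset.sum_range_succ, Finset.sum_range_zero]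
  push_cast
  ring

theorem exp_sub_one_sub_quadratic_isBigO :
    (fun z : ℂ ↦ exp z - 1 - (z + z ^ 2 / 2)) =O[𝓝 0] fun z ↦ z ^ 3 := by
  convert! exp_sub_sum_range_isBigO_pow 3 using 2 with z
  simp only [Finset.sum_range_succ, Finset.sum_range_zero, Nat.factorial]
  push_cast
  ring

theorem exp_sub_one_isBigO : (fun z : ℂ ↦ exp z - 1) =O[𝓝 0] fun z ↦ z := by
  simpa using exp_sub_sum_range_isBigO_pow 1

theorem exp_sub_one_sq_sub_sq_isBigO :
    (fun z : ℂ ↦ (exp z - 1) ^ 2 - z ^ 2) =O[𝓝 0] fun z ↦ z ^ 3 := by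
  have hsub : (fun z : ℂ ↦ exp z - 1 - z) =O[𝓝 0] fun z ↦ z ^ 2 := by
    simpa [Finset.sum_range_succ, sub_sub] using exp_sub_sum_range_isBigO_pow 2
  have hadd : (fun z : ℂ ↦ exp z - 1 + z) =O[𝓝 0] fun z ↦ z :=
    exp_sub_one_isBigO.add (isBigO_refl _ _)
  exact (hsub.mul hadd).congr (fun z ↦ by ring) (fun z ↦ by ring)

theorem log_one_add_mul_exp_sub_one_sub_quadratic_isBigO (a : ℂ) :
    (fun z : ℂ ↦ log (1 + a * (exp z - 1)) - (a * z + (a - a ^ 2) / 2 * z ^ 2))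
      =O[𝓝 0] fun z ↦ z ^ 3 := by
  have hlim : Tendsto (fun z : ℂ ↦ a * (exp z - 1)) (𝓝 0) (𝓝 0) :=
    Continuous.tendsto' (by fun_prop) _ _ (by simp)
  have hlog : (fun z : ℂ ↦ log (1 + a * (exp z - 1)) -
      (a * (exp z - 1) - (a * (exp z - 1)) ^ 2 / 2)) =O[𝓝 0] fun z ↦ z ^ 3 :=
    (log_one_add_sub_quadratic_isBigO.comp_tendsto hlim).trans
      ((exp_sub_one_isBigO.const_mul_left a).pow 3)
  refine ((hlog.add (exp_sub_one_sub_quadratic_isBigO.const_mul_left a)).sub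
    (exp_sub_one_sq_sub_sq_isBigO.const_mul_left (a ^ 2 / 2))).congr_left fun z ↦ ?_
  ring

theorem one_sub_ofReal_ne_zero {q : ℝ} (hq : q ≠ 1) : (1 - q : ℂ) ≠ 0 :=
  sub_ne_zero.2 (by exact_mod_cast hq.symm)

theorem Gq_eq_log_one_add {q : ℝ} (hq : q < 1) {z : ℂ} (hz : q * exp z ≠ 1) :
    Gq q z = log (1 + -(q / (1 - q)) * (exp z - 1)) + q / (1 - q) * z := by
  have hq' := one_sub_ofReal_ne_zero hq.ne
  have hfactor : 1 - q * exp z = (1 - q : ℝ) * (1 + -(q / (1 - q)) * (exp z - 1)) := by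
    push_cast
    field_simp
    ring
  have hne : 1 + -(q / (1 - q)) * (exp z - 1) ≠ 0 :=
    right_ne_zero_of_mul (hfactor ▸ sub_ne_zero.2 hz.symm)
  rw [Gq, hfactor, log_ofReal_mul (sub_pos.2 hq) hne, ofReal_log (sub_pos.2 hq).le]
  push_cast
  ring

theorem eventually_mul_exp_re_lt_one {q : ℝ} (hq : q < 1) :
    ∀ᶠ z : ℂ in 𝓝 0, q * Real.exp z.re < 1 :=
  ContinuousAt.eventually_lt (by fun_prop) continuousAt_const (by simpa using hq)

theorem Gq_add_quadratic_isBigO {q : ℝ} (hq : q < 1) :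
    (fun z ↦ Gq q z + q * z ^ 2 / (2 * (1 - q) ^ 2)) =O[𝓝 0] fun z ↦ z ^ 3 := by
  have hne : ∀ᶠ z : ℂ in 𝓝 0, q * exp z ≠ 1 :=
    ContinuousAt.eventually_ne (by fun_prop) (by simpa using mod_cast hq.ne)
  refine (log_one_add_mul_exp_sub_one_sub_quadratic_isBigO (-(q / (1 - q)))).congr' ?_ .rfl
  filter_upwards [hne] with z hz
  have hq' := one_sub_ofReal_ne_zero hq.ne
  rw [Gq_eq_log_one_add hq hz]
  field_simp
  ring

theorem norm_one_sub_mul_exp_I_mul_sq (q x : ℝ) :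
    ‖1 - q * exp (I * x)‖ ^ 2 = 1 + q ^ 2 - 2 * q * Real.cos x := by
  have hcartesian :
      1 - q * exp (I * x) = (1 - q * Real.cos x : ℝ) + (-(q * Real.sin x) : ℝ) * I := by
    rw [mul_comm I, exp_ofReal_mul_I]
    push_cast
    ring
  rw [hcartesian, Complex.sq_norm, normSq_add_mul_I]
  linear_combination q ^ 2 * Real.sin_sq_add_cos_sq x

theorem re_Gq_I_mul (q x : ℝ) :
    (Gq q (I * x)).re =
      1 / 2 * Real.log (1 + q ^ 2 - 2 * q * Real.cos x) - Real.log (1 - q) := by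
  have hlinear : (q * (I * x) / (1 - q) : ℂ).re = 0 := by
    rw [show (q * (I * x) / (1 - q) : ℂ) = (q * x / (1 - q) : ℝ) * I by push_cast; ring,
      re_ofReal_mul, I_re, mul_zero]
  have hnorm : ‖(1 - q : ℂ)‖ = |1 - q| := by
    rw [← Real.norm_eq_abs, ← norm_real, ofReal_sub, ofReal_one]
  rw [Gq, add_re, sub_re, hlinear, log_re, log_re, hnorm, Real.log_abs,
    ← norm_one_sub_mul_exp_I_mul_sq, Real.log_pow]
  push_cast
  ring

theorem mul_one_sub_cos_div_le_re_Gq {q : ℝ} (hq₀ : 0 ≤ q) (hq₁ : q ≠ 1) (x : ℝ) :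
    q * (1 - Real.cos x) / (1 + q) ^ 2 ≤ (Gq q (I * x)).re := by
  set L := 1 + q ^ 2 - 2 * q * Real.cos x with hL
  have hsq : 0 < (1 - q) ^ 2 := sq_pos_of_ne_zero (sub_ne_zero.2 hq₁.symm)
  have hcos : 0 ≤ q * (1 - Real.cos x) := mul_nonneg hq₀ (by linarith [Real.cos_le_one x])
  have hL_pos : 0 < L := by linarith
  have hL_le : L ≤ (1 + q) ^ 2 := by
    linarith [mul_le_mul_of_nonneg_left (Real.neg_one_le_cos x) hq₀]
  have hlog : 1 - (1 - q) ^ 2 / L ≤ Real.log L - 2 * Real.log (1 - q) := by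
    have := Real.one_sub_inv_le_log_of_pos (div_pos hL_pos hsq)
    rwa [inv_div, Real.log_div hL_pos.ne' hsq.ne', Real.log_pow, Nat.cast_two] at this
  calc q * (1 - Real.cos x) / (1 + q) ^ 2
      ≤ q * (1 - Real.cos x) / L := by gcongr
    _ = 1 / 2 * (1 - (1 - q) ^ 2 / L) := by field_simp; rw [hL]; ring
    _ ≤ 1 / 2 * (Real.log L - 2 * Real.log (1 - q)) := by gcongr
    _ = (Gq q (I * x)).re := by rw [re_Gq_I_mul]; ring

theorem mul_sq_le_re_Gq {q : ℝ} (hq₀ : 0 ≤ q) (hq₁ : q ≠ 1) {x : ℝ} (hx : |x| ≤ Real.pi) :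
    2 * q / (Real.pi ^ 2 * (1 + q) ^ 2) * x ^ 2 ≤ (Gq q (I * x)).re :=
  calc 2 * q / (Real.pi ^ 2 * (1 + q) ^ 2) * x ^ 2
      = q * (2 / Real.pi ^ 2 * x ^ 2) / (1 + q) ^ 2 := by field_simp
    _ ≤ q * (1 - Real.cos x) / (1 + q) ^ 2 := by
      gcongr
      linarith [Real.cos_le_one_sub_mul_cos_sq hx]
    _ ≤ (Gq q (I * x)).re := mul_one_sub_cos_div_le_re_Gq hq₀ hq₁ x

/-- Lemma 5.1 (`PropertiesOfG`). -/
theorem stmt13 (q : ℝ) (hq : q ∈ Set.Ioo (0 : ℝ) 1) :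
    (∃ δ ∈ Set.Ioo (0 : ℝ) 1, ∃ C : ℝ, 0 < C ∧ ∀ z : ℂ, ‖z‖ ≤ δ →
      q * Real.exp z.re < 1 ∧
      ‖Gq q z + (q : ℂ) * z ^ 2 / (2 * (1 - (q : ℂ)) ^ 2)‖ ≤ C * ‖z‖ ^ 3) ∧
    (∃ ε : ℝ, 0 < ε ∧ ∀ x : ℝ, x ∈ Set.Icc (-Real.pi) Real.pi →
      (Gq q (Complex.I * (x : ℂ))).re =
        (1 / 2) * Real.log (1 + q ^ 2 - 2 * q * Real.cos x) - Real.log (1 - q) ∧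
      ε * x ^ 2 ≤ (Gq q (Complex.I * (x : ℂ))).re) := by
  obtain ⟨hq₀, hq₁⟩ := hq
  constructor
  · simpa only [norm_pow] using
      exists_radius_forall_and_norm_le_of_isBigO (Gq_add_quadratic_isBigO hq₁)
        (eventually_mul_exp_re_lt_one hq₁)
  · exact ⟨2 * q / (Real.pi ^ 2 * (1 + q) ^ 2), by positivity, fun x hx ↦
      ⟨re_Gq_I_mul q x, mul_sq_le_re_Gq hq₀.le hq₁.ne (abs_le.2 hx)⟩⟩
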